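/- Let N be a finite set and f : 2^N → ℝ a submodular set function with f(∅) = 0. For every x ∈ [0,1]^N, sorted along an enumeration e_1, …, e_n of N with x_{e_1} ≥ … ≥ x_{e_n}, the Lovász extension value equals the support function of P_f: f̂(x) = max{π·x : π ∈ P_f}, and the maximum is attained by the greedy vector π̄ with π̄_{e_i} = f(S_i) − f(S_{i−1}). Consequently epi f̂ = Q_f = P_f° ∩ ([0,1]^N × ℝ) for submodular f. -/

import Mathlib

/-!
Write `y k` for the `k`-th largest coordinate `x (e k)`, with `y k = 0` past the end. The Lovász
value is `∑ (y k - y (k+1)) g(S_{k+1})`, linear in the set function `g` with nonnegative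
coefficients. Summation by parts (`lovasz_eq_sum_increments`) turns it into
`∑ y k (g(S_{k+1}) - g(S_k))`; for `g = f` this is `π̄·x`, and for the modular function
`g S = π(S)` it is `π·x` (`lovasz_modular`). Monotonicity in `g` then gives `π·x ≤ f̂(x)` for
`π ∈ P_f`.

The greedy vector lies in `P_f` (`greedy_mem`): by induction on `k`, `π̄(S ∩ S_k) ≤ f(S ∩ S_k)`,
where the step is submodularity applied to `S ∩ S_{k+1}` and `S_k`.

For the epigraph, the half-space `π̄·x ≤ z` contains all generators of `Q_f`, so it contains `Q_f`.
Conversely `x` is the convex combination of the indicators of the `S_{k+1}` with weights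
`y k - y (k+1)` and of `∅` with weight `1 - y 0`, and the same combination of the values `f(S_k)`
is `f̂(x)`; shifting all heights by `z - f̂(x) ≥ 0` gives `(x, z)`.
-/

/-- `prefixSet e k` is the set `S_k = {e_1, …, e_k}` of the first `k` elements of the
enumeration `e` of the ground set. -/
def prefixSet {α : Type*} [DecidableEq α] {n : ℕ} (e : Fin n ≃ α) (k : ℕ) : Finset α :=
  (Finset.univ.filter (fun j : Fin n => (j : ℕ) < k)).image e

/-- The Lovász extension value
`f̂(x) = Σ_{i=1}^{n-1} (x_{e_i} - x_{e_{i+1}}) f(S_i) + x_{e_n} f(S_n)`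
of a set function `f` at `x`, along an enumeration `e` (with the convention
`x_{e_{n+1}} = 0`, so the last summand is `x_{e_n} f(S_n)`). -/
def lovasz {α : Type*} [Fintype α] [DecidableEq α] (f : Finset α → ℝ)
    (e : Fin (Fintype.card α) ≃ α) (x : α → ℝ) : ℝ :=
  ∑ i : Fin (Fintype.card α),
    (x (e i) - if h : (i : ℕ) + 1 < Fintype.card α then x (e ⟨(i : ℕ) + 1, h⟩) else 0) *
      f (prefixSet e ((i : ℕ) + 1))

/-- The `k`-th entry (from `0`) of `x` along `e`, extended by `0` beyond the last index. -/
def sortedEntry {α : Type*} {n : ℕ} (e : Fin n ≃ α) (x : α → ℝ) (k : ℕ) : ℝ :=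
  if h : k < n then x (e ⟨k, h⟩) else 0

section
variable {α : Type*}

lemma sortedEntry_fin {n : ℕ} (e : Fin n ≃ α) (x : α → ℝ) (i : Fin n) :
    sortedEntry e x i = x (e i) := by
  simp [sortedEntry]

lemma sortedEntry_antitone {n : ℕ} (e : Fin n ≃ α) (x : α → ℝ) (hx : ∀ i, 0 ≤ x i)
    (hsort : ∀ i j : Fin n, i ≤ j → x (e j) ≤ x (e i)) (k : ℕ) :
    0 ≤ sortedEntry e x k - sortedEntry e x (k + 1) := by
  unfold sortedEntry
  by_cases h : k + 1 < n
  · have h' : k < n := by omega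
    rw [dif_pos h, dif_pos h']
    exact sub_nonneg.2 (hsort _ _ (by simp))
  · rw [dif_neg h]
    split_ifs
    · simpa using hx _
    · simp

variable [DecidableEq α]

lemma prefixSet_zero {n : ℕ} (e : Fin n ≃ α) : prefixSet e 0 = ∅ := by
  simp [prefixSet]

lemma mem_prefixSet {n : ℕ} (e : Fin n ≃ α) (k : ℕ) (i : Fin n) :
    e i ∈ prefixSet e k ↔ (i : ℕ) < k := by
  simp [prefixSet]

lemma prefixSet_card [Fintype α] {n : ℕ} (e : Fin n ≃ α) : prefixSet e n = Finset.univ := by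
  ext a
  obtain ⟨i, rfl⟩ := e.surjective a
  simp [mem_prefixSet]

lemma prefixSet_succ {n : ℕ} (e : Fin n ≃ α) (i : Fin n) :
    prefixSet e (i + 1) = insert (e i) (prefixSet e i) := by
  ext a
  obtain ⟨j, rfl⟩ := e.surjective a
  simp only [mem_prefixSet, Finset.mem_insert, EmbeddingLike.apply_eq_iff_eq, Fin.ext_iff]
  omega

lemma greedy_mem [Fintype α] (f : Finset α → ℝ) (hf : f ∅ = 0)
    (hsub : ∀ S T : Finset α, f (S ∪ T) + f (S ∩ T) ≤ f S + f T)
    {n : ℕ} (e : Fin n ≃ α) (πbar : α → ℝ)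
    (hπbar : ∀ i : Fin n, πbar (e i) = f (prefixSet e ((i : ℕ) + 1)) - f (prefixSet e (i : ℕ)))
    (S : Finset α) : ∑ i ∈ S, πbar i ≤ f S := by
  have key : ∀ k ≤ n, ∑ i ∈ S ∩ prefixSet e k, πbar i ≤ f (S ∩ prefixSet e k) := by
    intro k
    induction k with
    | zero => simp [prefixSet_zero, hf]
    | succ k ih =>
      intro hk
      specialize ih (by omega)
      have hs := prefixSet_succ e ⟨k, hk⟩
      have hp := hπbar ⟨k, hk⟩
      have hn : e ⟨k, hk⟩ ∉ prefixSet e k := by simp [mem_prefixSet]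
      simp only at hs hp
      by_cases hS : e ⟨k, hk⟩ ∈ S
      · have h := hsub (S ∩ prefixSet e (k + 1)) (prefixSet e k)
        have h1 : S ∩ prefixSet e (k + 1) ∪ prefixSet e k = prefixSet e (k + 1) := by
          rw [hs]; ext a; simp only [Finset.mem_union, Finset.mem_inter, Finset.mem_insert]
          grind
        have h2 : S ∩ prefixSet e (k + 1) ∩ prefixSet e k = S ∩ prefixSet e k := by
          rw [hs]; ext a; simp only [Finset.mem_inter, Finset.mem_insert]
          tauto
        have h3 : S ∩ prefixSet e (k + 1) = insert (e ⟨k, hk⟩) (S ∩ prefixSet e k) := by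
          rw [hs, Finset.inter_insert_of_mem hS]
        have h4 : ∑ i ∈ S ∩ prefixSet e (k + 1), πbar i =
            πbar (e ⟨k, hk⟩) + ∑ i ∈ S ∩ prefixSet e k, πbar i := by
          rw [h3, Finset.sum_insert (by simp [hn])]
        rw [h1, h2] at h
        linarith
      · rwa [hs, Finset.inter_insert_of_notMem hS]
  simpa [prefixSet_card] using key n le_rfl

variable [Fintype α]

lemma lovasz_eq_sum_sortedEntry (g : Finset α → ℝ) (e : Fin (Fintype.card α) ≃ α) (x : α → ℝ) :
    lovasz g e x = ∑ i : Fin (Fintype.card α),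
      (sortedEntry e x i - sortedEntry e x (i + 1)) * g (prefixSet e (i + 1)) := by
  simp only [sortedEntry_fin]
  rfl

/-- Summation by parts. -/
lemma lovasz_eq_sum_increments (g : Finset α → ℝ) (hg : g ∅ = 0)
    (e : Fin (Fintype.card α) ≃ α) (x : α → ℝ) :
    lovasz g e x = ∑ i : Fin (Fintype.card α),
      (g (prefixSet e (i + 1)) - g (prefixSet e i)) * x (e i) := by
  have key : ∀ m : ℕ, ∑ k ∈ Finset.range m,
      (sortedEntry e x k - sortedEntry e x (k + 1)) * g (prefixSet e (k + 1)) =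
      ∑ k ∈ Finset.range m, (g (prefixSet e (k + 1)) - g (prefixSet e k)) * sortedEntry e x k
        - sortedEntry e x m * g (prefixSet e m) := by
    intro m
    induction m with
    | zero => simp [prefixSet_zero, hg]
    | succ m ih =>
      rw [Finset.sum_range_succ, Finset.sum_range_succ, ih]
      ring
  have h := key (Fintype.card α)
  have h0 : sortedEntry e x (Fintype.card α) = 0 := by simp [sortedEntry]
  rw [h0, zero_mul, sub_zero, Finset.sum_range, Finset.sum_range] at h
  rw [lovasz_eq_sum_sortedEntry, h]
  simp only [sortedEntry_fin]

lemma lovasz_modular (π : α → ℝ) (e : Fin (Fintype.card α) ≃ α) (x : α → ℝ) :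
    lovasz (fun S => ∑ i ∈ S, π i) e x = ∑ i, π i * x i := by
  rw [lovasz_eq_sum_increments _ (by simp), ← e.sum_comp (fun i => π i * x i)]
  refine Finset.sum_congr rfl fun i _ => ?_
  rw [prefixSet_succ, Finset.sum_insert (by simp [mem_prefixSet])]
  ring

/-- Every point on or above the graph of the Lovász extension is a convex combination of
points on or above the graph of `f`. -/
lemma mem_convexHull_of_lovasz_le (f : Finset α → ℝ) (hf : f ∅ = 0)
    (x : α → ℝ) (hx : ∀ i, 0 ≤ x i ∧ x i ≤ 1) (e : Fin (Fintype.card α) ≃ α)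
    (hsort : ∀ i j : Fin (Fintype.card α), i ≤ j → x (e j) ≤ x (e i))
    (z : ℝ) (hz : lovasz f e x ≤ z) :
    (x, z) ∈ convexHull ℝ {p : (α → ℝ) × ℝ | ∃ S : Finset α,
        p.1 = (fun i => if i ∈ S then (1 : ℝ) else 0) ∧ f S ≤ p.2} := by
  -- The index `none` stands for the empty set, `some i` for the prefix ending in `e i`.
  let T : Option (Fin (Fintype.card α)) → Finset α :=
    fun o => o.elim ∅ (fun i => prefixSet e (i + 1))
  let w : Option (Fin (Fintype.card α)) → ℝ :=
    fun o => o.elim (1 - sortedEntry e x 0)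
      (fun i => sortedEntry e x i - sortedEntry e x (i + 1))
  let p : Option (Fin (Fintype.card α)) → (α → ℝ) × ℝ :=
    fun o => (fun i => if i ∈ T o then (1 : ℝ) else 0, f (T o) + (z - lovasz f e x))
  have hw0 : ∀ o ∈ Finset.univ, 0 ≤ w o := by
    rintro (_ | i) -
    · change 0 ≤ 1 - sortedEntry e x 0
      unfold sortedEntry
      split_ifs
      · linarith [(hx (e ⟨0, by assumption⟩)).2]
      · norm_num
    · exact sortedEntry_antitone e x (fun i => (hx i).1) hsort i
  have hw1 : ∑ o, w o = 1 := by
    rw [Fintype.sum_option]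
    change 1 - sortedEntry e x 0 + ∑ i : Fin (Fintype.card α),
      (sortedEntry e x i - sortedEntry e x (i + 1)) = 1
    rw [← Finset.sum_range (fun k => sortedEntry e x k - sortedEntry e x (k + 1)),
      Finset.sum_range_sub']
    simp [sortedEntry]
  have hw : ∀ g : Finset α → ℝ, g ∅ = 0 → ∑ o, w o * g (T o) = lovasz g e x := by
    intro g hg
    rw [Fintype.sum_option, lovasz_eq_sum_sortedEntry]
    simp [w, T, hg]
  have hmem := (convex_convexHull ℝ {p : (α → ℝ) × ℝ | ∃ S : Finset α,
        p.1 = (fun i => if i ∈ S then (1 : ℝ) else 0) ∧ f S ≤ p.2}).sum_mem (z := p) hw0 hw1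
    (fun o _ => subset_convexHull ℝ _ ⟨T o, rfl, by simp only [p]; linarith⟩)
  convert hmem using 1
  refine Prod.ext ?_ ?_
  · funext j
    -- The indicator of `j ∈ S` is the modular function of the `j`-th unit vector.
    have h := hw (fun S => ∑ i ∈ S, (Pi.single j (1 : ℝ) : α → ℝ) i) (by simp)
    rw [lovasz_modular] at h
    simp only [Pi.single_apply, ite_mul, one_mul, zero_mul,
      Finset.sum_ite_eq', Finset.mem_univ, if_true] at h
    simp [Prod.fst_sum, Finset.sum_apply, p, ← h]
  · simp only [Prod.snd_sum, p, Prod.smul_snd, smul_eq_mul, mul_add, Finset.sum_add_distrib,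
      hw f hf, ← Finset.sum_mul, hw1]
    ring

end

/-- For submodular `f` with `f ∅ = 0` and `x ∈ [0,1]^N` sorted
nonincreasingly along the enumeration `e`, the Lovász extension value equals the support
function of `P_f`: the greedy vector `π̄` lies in `P_f` and attains `π̄·x = f̂(x)`, and
`π·x ≤ f̂(x)` for all `π ∈ P_f`. Consequently `epi f̂ = Q_f = P_f° ∩ ([0,1]^N × ℝ)`:
a point `(x,z)` lies in `Q_f` if and only if `f̂(x) ≤ z`. -/
theorem lovasz_eq_support_function_of_Pf
    {α : Type*} [Fintype α] [DecidableEq α]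
    (f : Finset α → ℝ) (hf : f ∅ = 0)
    (hsub : ∀ S T : Finset α, f (S ∪ T) + f (S ∩ T) ≤ f S + f T)
    (x : α → ℝ) (hx : ∀ i, 0 ≤ x i ∧ x i ≤ 1)
    (e : Fin (Fintype.card α) ≃ α)
    (hsort : ∀ i j : Fin (Fintype.card α), i ≤ j → x (e j) ≤ x (e i))
    (πbar : α → ℝ)
    (hπbar : ∀ i : Fin (Fintype.card α),
      πbar (e i) = f (prefixSet e ((i : ℕ) + 1)) - f (prefixSet e (i : ℕ))) :
    (∀ S : Finset α, ∑ i ∈ S, πbar i ≤ f S) ∧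
    (∑ i, πbar i * x i = lovasz f e x) ∧
    (∀ π : α → ℝ, (∀ S : Finset α, ∑ i ∈ S, π i ≤ f S) →
      ∑ i, π i * x i ≤ lovasz f e x) ∧
    (∀ z : ℝ,
      (x, z) ∈ convexHull ℝ {p : (α → ℝ) × ℝ | ∃ S : Finset α,
        p.1 = (fun i => if i ∈ S then (1 : ℝ) else 0) ∧ f S ≤ p.2} ↔
      lovasz f e x ≤ z) := by
  have hmem := greedy_mem f hf hsub e πbar hπbar
  have hval : ∑ i, πbar i * x i = lovasz f e x := by
    rw [lovasz_eq_sum_increments f hf, ← e.sum_comp (fun i => πbar i * x i)]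
    exact Finset.sum_congr rfl fun i _ => by rw [hπbar]
  refine ⟨hmem, hval, ?_, ?_⟩
  · intro π hπ
    rw [← lovasz_modular π e x, lovasz_eq_sum_sortedEntry, lovasz_eq_sum_sortedEntry]
    exact Finset.sum_le_sum fun i _ => mul_le_mul_of_nonneg_left (hπ _)
      (sortedEntry_antitone e x (fun i => (hx i).1) hsort i)
  · intro z
    refine ⟨fun h => ?_, mem_convexHull_of_lovasz_le f hf x hx e hsort z⟩
    have hconv : Convex ℝ {p : (α → ℝ) × ℝ | ∑ i, πbar i * p.1 i ≤ p.2} := by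
      intro p hp q hq a b ha hb _
      simp only [Set.mem_ofPred_eq] at hp hq ⊢
      have h1 : ∑ i, πbar i * (a • p + b • q).1 i =
          a * ∑ i, πbar i * p.1 i + b * ∑ i, πbar i * q.1 i := by
        rw [Finset.mul_sum, Finset.mul_sum, ← Finset.sum_add_distrib]
        refine Finset.sum_congr rfl fun i _ => ?_
        simp only [Prod.fst_add, Prod.smul_fst, Pi.add_apply, Pi.smul_apply, smul_eq_mul]
        ring
      rw [h1]
      exact add_le_add (mul_le_mul_of_nonneg_left hp ha) (mul_le_mul_of_nonneg_left hq hb)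
    have hsubset := convexHull_min (𝕜 := ℝ) (s := {p : (α → ℝ) × ℝ | ∃ S : Finset α,
        p.1 = (fun i => if i ∈ S then (1 : ℝ) else 0) ∧ f S ≤ p.2}) (by
      rintro p ⟨S, hp, hS⟩
      simp only [Set.mem_ofPred_eq, hp]
      simpa using (hmem S).trans hS) hconv
    rw [← hval]
    exact hsubset h
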